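/- arXiv:2502.16370 — 5 statements merged into one kernel-verified Lean document; each statement's English description precedes it below -/
import Mathlib

section
/- Let μ be the uniform probability measure (normalized Lebesgue measure) on the unit square [0,1]² ⊂ ℝ² and ν the uniform probability measure on [2,3] × [0,1] ⊂ ℝ². Define I(x,y) := ‖x−y‖ − (y₁ − x₁) for x = (x₁,x₂) ∈ [0,1]² and y = (y₁,y₂) ∈ [2,3] × [0,1], where ‖·‖ is the Euclidean norm (note I ≥ 0). Then there exists a constant C > 0 such that for all ε ∈ (0,1], ∫∫ e^{−I(x,y)/ε} dμ(x) dν(y) ≤ C √ε. -/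
open MeasureTheory Metric Filter Topology Set

noncomputable section

/-- The unit square `[0,1]² ⊂ ℝ²`. -/
def sqX : Set (EuclideanSpace ℝ (Fin 2)) := {x | x 0 ∈ Set.Icc (0:ℝ) 1 ∧ x 1 ∈ Set.Icc (0:ℝ) 1}

/-- The translated unit square `[2,3] × [0,1] ⊂ ℝ²`. -/
def sqY : Set (EuclideanSpace ℝ (Fin 2)) := {y | y 0 ∈ Set.Icc (2:ℝ) 3 ∧ y 1 ∈ Set.Icc (0:ℝ) 1}

/-- The uniform (normalized Lebesgue) probability measure on a set. -/
def unifOn (A : Set (EuclideanSpace ℝ (Fin 2))) : Measure (EuclideanSpace ℝ (Fin 2)) :=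
  (volume A)⁻¹ • volume.restrict A

/- Write `v = y - x`. Then `v₂² = (‖v‖ - v₁)(‖v‖ + v₁) ≤ 2 ‖v‖ (‖v‖ - v₁)`, so for pairs at
distance at most `R` the slack `‖v‖ - v₁` is at least `v₂² / (2R)`. Hence `exp (-I / ε)` is
dominated by a Gaussian of variance `R ε` in the transverse coordinate alone, whose integral against
a transverse density bounded by `K` is at most `K √(2πRε)`. -/

open scoped NNReal ENNReal Real

section Slack

variable {ι : Type*} [Fintype ι] {i j : ι}

/-- The slack function `‖x - y‖ - u x + u y` of the potential `u z = -z i`. -/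
def slack (i : ι) (x y : EuclideanSpace ℝ ι) : ℝ :=
  ‖x - y‖ - (y i - x i)

lemma measurable_slack (i : ι) :
    Measurable fun z : EuclideanSpace ℝ ι × EuclideanSpace ℝ ι ↦ slack i z.1 z.2 := by
  unfold slack
  fun_prop

lemma sq_apply_add_sq_apply_le_norm_sq (hij : i ≠ j) (v : EuclideanSpace ℝ ι) :
    v i ^ 2 + v j ^ 2 ≤ ‖v‖ ^ 2 := by
  classical
  rw [EuclideanSpace.real_norm_sq_eq, ← Finset.sum_pair (f := fun k ↦ v k ^ 2) hij]
  exact Finset.sum_le_univ_sum_of_nonneg fun k ↦ sq_nonneg (v k)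

lemma sq_apply_le_two_mul_norm_mul_norm_sub_apply (hij : i ≠ j) (v : EuclideanSpace ℝ ι) :
    v j ^ 2 ≤ 2 * ‖v‖ * (‖v‖ - v i) := by
  -- `(‖v‖ - v i) (‖v‖ + v i) = 2 ‖v‖ (‖v‖ - v i) - (‖v‖ - v i) ^ 2`
  linarith [sq_apply_add_sq_apply_le_norm_sq hij v, sq_nonneg (‖v‖ - v i)]

lemma sq_sub_div_le_slack (hij : i ≠ j) {R : ℝ} (hR : 0 < R) {x y : EuclideanSpace ℝ ι}
    (hxy : ‖x - y‖ ≤ R) : (x j - y j) ^ 2 / (2 * R) ≤ slack i x y := by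
  have h_sq : (x j - y j) ^ 2 ≤ 2 * ‖x - y‖ * slack i x y := by
    have h := sq_apply_le_two_mul_norm_mul_norm_sub_apply hij (y - x)
    rwa [norm_sub_rev, PiLp.sub_apply, PiLp.sub_apply, ← neg_sub, neg_sq] at h
  have h_nonneg : 0 ≤ slack i x y := by
    have h := (le_abs_self _).trans (PiLp.norm_apply_le (y - x) i)
    rw [norm_sub_rev] at h
    exact sub_nonneg.2 h
  rw [div_le_iff₀' (by positivity)]
  exact h_sq.trans (by gcongr)

lemma exp_neg_slack_div_le (hij : i ≠ j) {R ε : ℝ} (hR : 0 < R) (hε : 0 < ε)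
    {x y : EuclideanSpace ℝ ι} (hxy : ‖x - y‖ ≤ R) :
    Real.exp (-slack i x y / ε) ≤ Real.exp (-(2 * R * ε)⁻¹ * (x j - y j) ^ 2) := by
  have h_eq : -(2 * R * ε)⁻¹ * (x j - y j) ^ 2 = -((x j - y j) ^ 2 / (2 * R)) / ε := by
    field_simp
  rw [h_eq]
  gcongr
  exact sq_sub_div_le_slack hij hR hxy

end Slack

section Gaussian

variable {α β : Type*} [MeasurableSpace α] [MeasurableSpace β] {b : ℝ}

lemma lintegral_exp_neg_mul_sq_sub (hb : 0 < b) (c : ℝ) :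
    ∫⁻ t : ℝ, ENNReal.ofReal (Real.exp (-b * (t - c) ^ 2)) = ENNReal.ofReal √(π / b) := by
  rw [lintegral_sub_right_eq_self (fun t : ℝ ↦ ENNReal.ofReal (Real.exp (-b * t ^ 2))) c,
    ← integral_gaussian, ofReal_integral_eq_lintegral_ofReal (integrable_exp_neg_mul_sq hb)]
  exact .of_forall fun _ ↦ (Real.exp_pos _).le

lemma lintegral_exp_neg_mul_sq_sub_le_of_map_le (hb : 0 < b) (c : ℝ) {μ : Measure α} {f : α → ℝ}
    (hf : Measurable f) {K : ℝ≥0} (hμ : μ.map f ≤ K • volume) :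
    ∫⁻ x, ENNReal.ofReal (Real.exp (-b * (f x - c) ^ 2)) ∂μ ≤ K * ENNReal.ofReal √(π / b) :=
  calc
    _ = ∫⁻ t, ENNReal.ofReal (Real.exp (-b * (t - c) ^ 2)) ∂μ.map f :=
      (lintegral_map (by fun_prop) hf).symm
    _ ≤ ∫⁻ t, ENNReal.ofReal (Real.exp (-b * (t - c) ^ 2)) ∂(K • volume) :=
      lintegral_mono' hμ le_rfl
    _ = _ := by
      rw [lintegral_smul_measure, lintegral_exp_neg_mul_sq_sub hb, ENNReal.smul_def, smul_eq_mul]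

lemma lintegral_prod_exp_neg_mul_sq_sub_le_of_map_le (hb : 0 < b) {μ : Measure α} [SFinite μ]
    {ν : Measure β} [IsProbabilityMeasure ν] {f : α → ℝ} {g : β → ℝ} (hf : Measurable f)
    (hg : Measurable g) {K : ℝ≥0} (hμ : μ.map f ≤ K • volume) :
    ∫⁻ z, ENNReal.ofReal (Real.exp (-b * (f z.1 - g z.2) ^ 2)) ∂μ.prod ν ≤
      K * ENNReal.ofReal √(π / b) := by
  rw [lintegral_prod_symm _ (by fun_prop)]
  calc
    _ ≤ ∫⁻ _, K * ENNReal.ofReal √(π / b) ∂ν :=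
      lintegral_mono fun y ↦ lintegral_exp_neg_mul_sq_sub_le_of_map_le hb (g y) hf hμ
    _ = _ := by rw [lintegral_const, measure_univ, mul_one]

end Gaussian

section Box

variable {ι : Type*}

/-- The box `∏ i, s i`, as a set of vectors of the Euclidean space `ℝ^ι`. -/
def euclideanBox (s : ι → Set ℝ) : Set (EuclideanSpace ℝ ι) :=
  WithLp.ofLp ⁻¹' univ.pi s

lemma measurableSet_euclideanBox [Countable ι] {s : ι → Set ℝ}
    (hs : ∀ i, MeasurableSet (s i)) : MeasurableSet (euclideanBox s) :=
  WithLp.measurable_ofLp 2 _ (.univ_pi hs)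

variable [Fintype ι]

lemma volume_euclideanBox (s : ι → Set ℝ) : volume (euclideanBox s) = ∏ i, volume (s i) := by
  rw [euclideanBox, (PiLp.volume_preserving_ofLp ι).measure_preimage_emb
    (MeasurableEquiv.toLp 2 _).symm.measurableEmbedding, volume_pi_pi]

lemma map_apply_restrict_euclideanBox [DecidableEq ι] (s : ι → Set ℝ) (j : ι) :
    (volume.restrict (euclideanBox s)).map (fun x ↦ x j) =
      (∏ i ∈ Finset.univ.erase j, volume (s i)) • volume.restrict (s j) := by
  have h_ofLp : (volume.restrict (euclideanBox s)).map WithLp.ofLp =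
      Measure.pi fun i ↦ volume.restrict (s i) := by
    rw [← Measure.restrict_pi_pi]
    exact ((PiLp.volume_preserving_ofLp ι).restrict_preimage_emb
      (MeasurableEquiv.toLp 2 _).symm.measurableEmbedding _).map_eq
  calc
    _ = ((volume.restrict (euclideanBox s)).map WithLp.ofLp).map (Function.eval j) :=
      (Measure.map_map (measurable_pi_apply j) (PiLp.volume_preserving_ofLp ι).measurable).symm
    _ = _ := by simp only [h_ofLp, Measure.pi_map_eval, Measure.restrict_apply_univ]

end Box

lemma sqX_eq_euclideanBox : sqX = euclideanBox fun i ↦ Icc (![0, 0] i) (![1, 1] i) := by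
  ext x
  simp [sqX, euclideanBox, Pi.le_def, Fin.forall_fin_two, and_and_and_comm]

lemma sqY_eq_euclideanBox : sqY = euclideanBox fun i ↦ Icc (![2, 0] i) (![3, 1] i) := by
  ext y
  simp [sqY, euclideanBox, Pi.le_def, Fin.forall_fin_two, and_and_and_comm]

lemma measurableSet_sqX : MeasurableSet sqX :=
  sqX_eq_euclideanBox ▸ measurableSet_euclideanBox fun _ ↦ measurableSet_Icc

lemma measurableSet_sqY : MeasurableSet sqY :=
  sqY_eq_euclideanBox ▸ measurableSet_euclideanBox fun _ ↦ measurableSet_Icc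

lemma volume_sqX : volume sqX = 1 := by
  rw [sqX_eq_euclideanBox, volume_euclideanBox]
  simp

lemma volume_sqY : volume sqY = 1 := by
  rw [sqY_eq_euclideanBox, volume_euclideanBox]
  norm_num [Fin.prod_univ_two]

lemma unifOn_sqX : unifOn sqX = volume.restrict sqX := by
  rw [unifOn, volume_sqX, inv_one, one_smul]

lemma unifOn_sqY : unifOn sqY = volume.restrict sqY := by
  rw [unifOn, volume_sqY, inv_one, one_smul]

instance isProbabilityMeasure_unifOn_sqX : IsProbabilityMeasure (unifOn sqX) :=
  ⟨by rw [unifOn_sqX, Measure.restrict_apply_univ, volume_sqX]⟩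

instance isProbabilityMeasure_unifOn_sqY : IsProbabilityMeasure (unifOn sqY) :=
  ⟨by rw [unifOn_sqY, Measure.restrict_apply_univ, volume_sqY]⟩

lemma map_unifOn_sqX_le : (unifOn sqX).map (fun x ↦ x 1) ≤ volume := by
  have h_side :
      ∏ i ∈ Finset.univ.erase 1, volume (Icc ((![0, 0] : Fin 2 → ℝ) i) (![1, 1] i)) = 1 := by
    simp [show Finset.univ.erase (1 : Fin 2) = {0} from rfl]
  rw [unifOn_sqX, sqX_eq_euclideanBox, map_apply_restrict_euclideanBox, h_side, one_smul]
  exact Measure.restrict_le_self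

lemma norm_sub_le_of_mem_sqX_of_mem_sqY {x y : EuclideanSpace ℝ (Fin 2)} (hx : x ∈ sqX)
    (hy : y ∈ sqY) : ‖x - y‖ ≤ √10 := by
  obtain ⟨⟨hx₀, hx₀'⟩, hx₁, hx₁'⟩ := hx
  obtain ⟨⟨hy₀, hy₀'⟩, hy₁, hy₁'⟩ := hy
  refine Real.le_sqrt_of_sq_le ?_
  rw [EuclideanSpace.real_norm_sq_eq, Fin.sum_univ_two, PiLp.sub_apply, PiLp.sub_apply]
  have h₀ : (x 0 - y 0) ^ 2 ≤ 3 ^ 2 := sq_le_sq' (by linarith) (by linarith)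
  have h₁ : (x 1 - y 1) ^ 2 ≤ 1 ^ 2 := sq_le_sq' (by linarith) (by linarith)
  linarith

lemma ae_norm_sub_le_unifOn_prod :
    ∀ᵐ z ∂(unifOn sqX).prod (unifOn sqY), ‖z.1 - z.2‖ ≤ √10 := by
  have hX : ∀ᵐ x ∂unifOn sqX, x ∈ sqX := unifOn_sqX ▸ ae_restrict_mem measurableSet_sqX
  have hY : ∀ᵐ y ∂unifOn sqY, y ∈ sqY := unifOn_sqY ▸ ae_restrict_mem measurableSet_sqY
  filter_upwards [Measure.quasiMeasurePreserving_fst.ae hX,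
    Measure.quasiMeasurePreserving_snd.ae hY] with z hx hy
  exact norm_sub_le_of_mem_sqX_of_mem_sqY hx hy

theorem stmt6_general {ι : Type*} [Fintype ι] {i j : ι} (hij : i ≠ j)
    {μ ν : Measure (EuclideanSpace ℝ ι)} [SFinite μ] [IsProbabilityMeasure ν] {K : ℝ≥0}
    (hμ : μ.map (fun x ↦ x j) ≤ K • volume) {R : ℝ} (hR : 0 < R)
    (hμν : ∀ᵐ z ∂μ.prod ν, ‖z.1 - z.2‖ ≤ R) {ε : ℝ} (hε : 0 < ε) :
    ∫ z, Real.exp (-slack i z.1 z.2 / ε) ∂μ.prod ν ≤ K * √(2 * π * R) * √ε := by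
  have h_meas : Measurable fun z : EuclideanSpace ℝ ι × EuclideanSpace ℝ ι ↦
      Real.exp (-slack i z.1 z.2 / ε) := ((measurable_slack i).neg.div_const ε).exp
  rw [integral_eq_lintegral_of_nonneg_ae (.of_forall fun _ ↦ (Real.exp_pos _).le)
    h_meas.aestronglyMeasurable]
  refine ENNReal.toReal_le_of_le_ofReal (by positivity) ?_
  calc
    ∫⁻ z, ENNReal.ofReal (Real.exp (-slack i z.1 z.2 / ε)) ∂μ.prod ν
    _ ≤ ∫⁻ z, ENNReal.ofReal (Real.exp (-(2 * R * ε)⁻¹ * (z.1 j - z.2 j) ^ 2)) ∂μ.prod ν := by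
      refine lintegral_mono_ae ?_
      filter_upwards [hμν] with z hz
      exact ENNReal.ofReal_le_ofReal (exp_neg_slack_div_le hij hR hε hz)
    _ ≤ K * ENNReal.ofReal √(π / (2 * R * ε)⁻¹) :=
      lintegral_prod_exp_neg_mul_sq_sub_le_of_map_le (f := fun x : EuclideanSpace ℝ ι ↦ x j)
        (g := fun y : EuclideanSpace ℝ ι ↦ y j) (by positivity) (by fun_prop) (by fun_prop) hμ
    _ = ENNReal.ofReal (K * √(2 * π * R) * √ε) := by
      have h_sqrt : √(π / (2 * R * ε)⁻¹) = √(2 * π * R) * √ε := by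
        rw [← Real.sqrt_mul (by positivity), div_inv_eq_mul]
        ring_nf
      rw [h_sqrt, ← ENNReal.ofReal_coe_nnreal, ← ENNReal.ofReal_mul K.coe_nonneg, mul_assoc (K : ℝ)]

/-- For uniform measures on `[0,1]²` and `[2,3]×[0,1]` and the slack
`I(x,y) = ‖x−y‖ − (y₁ − x₁)`, one has `∫∫ e^{−I/ε} dμ dν ≤ C √ε` for `0 < ε ≤ 1`. -/
theorem stmt6 :
    ∃ C : ℝ, 0 < C ∧ ∀ ε : ℝ, 0 < ε → ε ≤ 1 →
      (∫ z, Real.exp (-(‖z.1 - z.2‖ - (z.2 0 - z.1 0)) / ε) ∂((unifOn sqX).prod (unifOn sqY)))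
        ≤ C * Real.sqrt ε := by
  refine ⟨(1 : ℝ≥0) * √(2 * π * √10), by positivity, fun ε hε _ ↦ ?_⟩
  exact stmt6_general zero_ne_one (by simpa using map_unifOn_sqX_le) (by positivity)
    ae_norm_sub_le_unifOn_prod hε
end
end

section
/- Let a, d₀, d₁ ∈ ℝ^n and r > 0 satisfy ‖a − d₀‖ ≥ r and ‖a − d₁‖ ≥ r, and set v := (a − d₀)/‖a − d₀‖ − (a − d₁)/‖a − d₁‖. Assume v ≠ 0, let 0 < t ≤ r/2 and set a' := a − t·v/‖v‖. Then ‖a − d₀‖ − ‖a' − d₀‖ + ‖a' − d₁‖ − ‖a − d₁‖ ≥ t‖v‖ − 2t²/r. Moreover, if d₁ ≠ a, then ‖v‖ ≥ dist(d₀, L)/‖a − d₀‖, where L is the affine line through a and d₁ and dist(d₀, L) is the Euclidean distance from d₀ to L. -/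
open MeasureTheory Metric Filter Topology Set

noncomputable section

/-! The norm is convex with gradient `x / ‖x‖`, so `‖x₁ - y‖` lies above its linearization at
`x₁`, while `2 ‖x₀‖ ‖x₀ - y‖ ≤ ‖x₀‖² + ‖x₀ - y‖²` bounds `‖x₀ - y‖` by its linearization at `x₀`
plus `‖y‖² / (2 ‖x₀‖)`. With `xᵢ = a - dᵢ`, the difference of the linear terms is `⟪v, y⟫`, which
equals `t ‖v‖` for the step `y = t v / ‖v‖`. The lower bound on `‖v‖` comes from the point reached
by going from `a` a distance `‖a - d₀‖` towards `d₁`: it lies on the line, and its distance to `d₀`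
is `‖a - d₀‖ ‖v‖`. -/

section

open NormedSpace
open scoped RealInnerProductSpace

variable {E : Type*} [NormedAddCommGroup E] [InnerProductSpace ℝ E]

lemma real_inner_normalize_self (x : E) : ⟪normalize x, x⟫ = ‖x‖ := by
  rw [NormedSpace.normalize, real_inner_smul_left, real_inner_self_eq_norm_sq, sq, ← mul_assoc]
  exact inv_mul_mul_self ‖x‖

lemma norm_sub_inner_normalize_le_norm_sub {x : E} (hx : x ≠ 0) (y : E) :
    ‖x‖ - ⟪normalize x, y⟫ ≤ ‖x - y‖ :=
  calc ‖x‖ - ⟪normalize x, y⟫ = ⟪normalize x, x - y⟫ := by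
        rw [inner_sub_right, real_inner_normalize_self]
    _ ≤ ‖normalize x‖ * ‖x - y‖ := real_inner_le_norm _ _
    _ = ‖x - y‖ := by rw [norm_normalize hx, one_mul]

lemma norm_sub_le_norm_sub_inner_normalize_add {x : E} (hx : x ≠ 0) (y : E) :
    ‖x - y‖ ≤ ‖x‖ - ⟪normalize x, y⟫ + ‖y‖ ^ 2 / (2 * ‖x‖) := by
  have : 0 < ‖x‖ := norm_pos_iff.mpr hx
  calc ‖x - y‖ ≤ (‖x‖ ^ 2 + ‖x - y‖ ^ 2) / (2 * ‖x‖) := by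
        rw [le_div_iff₀' (by positivity)]
        exact two_mul_le_add_sq _ _
    _ = ‖x‖ - ⟪normalize x, y⟫ + ‖y‖ ^ 2 / (2 * ‖x‖) := by
        rw [norm_sub_sq_real, NormedSpace.normalize, real_inner_smul_left]
        field_simp
        ring

lemma inner_normalize_sub_normalize_sub_le {x₀ x₁ : E} (hx₀ : x₀ ≠ 0) (hx₁ : x₁ ≠ 0) (y : E) :
    ⟪normalize x₀ - normalize x₁, y⟫ - ‖y‖ ^ 2 / (2 * ‖x₀‖) ≤
      ‖x₀‖ - ‖x₀ - y‖ + ‖x₁ - y‖ - ‖x₁‖ := by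
  rw [inner_sub_left]
  linarith [norm_sub_le_norm_sub_inner_normalize_add hx₀ y,
    norm_sub_inner_normalize_le_norm_sub hx₁ y]

lemma infDist_affineSpan_pair_le {F : Type*} [NormedAddCommGroup F] [NormedSpace ℝ F]
    (a d₀ d₁ : F) :
    infDist d₀ (affineSpan ℝ {a, d₁} : Set F) ≤
      ‖normalize (a - d₀) - normalize (a - d₁)‖ * ‖a - d₀‖ := by
  set c : F := AffineMap.lineMap a d₁ (‖a - d₀‖ * ‖a - d₁‖⁻¹) with hc
  have hc_mem : c ∈ affineSpan ℝ {a, d₁} := AffineMap.lineMap_mem_affineSpan_pair _ _ _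
  have hc_sub : c - d₀ = ‖a - d₀‖ • (normalize (a - d₀) - normalize (a - d₁)) := by
    rw [smul_sub, norm_smul_normalize, hc, AffineMap.lineMap_apply_module',
      NormedSpace.normalize]
    module
  calc infDist d₀ (affineSpan ℝ {a, d₁} : Set F) ≤ dist d₀ c := infDist_le_dist_of_mem hc_mem
    _ = ‖normalize (a - d₀) - normalize (a - d₁)‖ * ‖a - d₀‖ := by
        rw [dist_comm, dist_eq_norm, hc_sub, norm_smul, norm_norm, mul_comm]

theorem stmt8_general {a d₀ d₁ : E} (h₀ : d₀ ≠ a) (h₁ : d₁ ≠ a) {v : E}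
    (hv : v = ‖a - d₀‖⁻¹ • (a - d₀) - ‖a - d₁‖⁻¹ • (a - d₁)) (hvne : v ≠ 0)
    (t : ℝ) {a' : E} (ha' : a' = a - (t * ‖v‖⁻¹) • v) :
    t * ‖v‖ - t ^ 2 / (2 * ‖a - d₀‖) ≤ ‖a - d₀‖ - ‖a' - d₀‖ + ‖a' - d₁‖ - ‖a - d₁‖ ∧
      infDist d₀ (affineSpan ℝ {a, d₁} : Set E) / ‖a - d₀‖ ≤ ‖v‖ := by
  change v = normalize (a - d₀) - normalize (a - d₁) at hv
  constructor
  · have hstep (d : E) : a' - d = (a - d) - t • normalize v := by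
      rw [ha', mul_smul, sub_right_comm, NormedSpace.normalize]
    have hinner : ⟪v, t • normalize v⟫ = t * ‖v‖ := by
      rw [real_inner_smul_right, real_inner_comm, real_inner_normalize_self]
    have hnorm : ‖t • normalize v‖ ^ 2 = t ^ 2 := by
      rw [norm_smul, norm_normalize hvne, mul_one, Real.norm_eq_abs, sq_abs]
    have hgain := inner_normalize_sub_normalize_sub_le
      (sub_ne_zero.mpr h₀.symm) (sub_ne_zero.mpr h₁.symm) (t • normalize v)
    rwa [← hv, hinner, hnorm, ← hstep, ← hstep] at hgain
  · rw [hv]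
    exact div_le_of_le_mul₀ (norm_nonneg _) (norm_nonneg _) (infDist_affineSpan_pair_le a d₀ d₁)

end

/-- Quantitative four-point inequality: perturbing `a` by a step of size `t`
in the direction of `v`, the difference of the unit vectors pointing from `d₀` and `d₁`
towards `a`, produces a first-order gain `t‖v‖` in the cyclical quantity, with a
second-order error `2t²/r`; moreover `‖v‖` is bounded below by the ratio of the distance
from `d₀` to the line through `a` and `d₁` and the distance `‖a - d₀‖`. -/
theorem stmt8 {n : ℕ} (a d₀ d₁ : EuclideanSpace ℝ (Fin n)) (r : ℝ) (hr : 0 < r)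
    (h₀ : r ≤ ‖a - d₀‖) (h₁ : r ≤ ‖a - d₁‖)
    (v : EuclideanSpace ℝ (Fin n))
    (hv : v = ‖a - d₀‖⁻¹ • (a - d₀) - ‖a - d₁‖⁻¹ • (a - d₁))
    (hvne : v ≠ 0) (t : ℝ) (ht : 0 < t) (htr : t ≤ r / 2)
    (a' : EuclideanSpace ℝ (Fin n)) (ha' : a' = a - (t * ‖v‖⁻¹) • v) :
    t * ‖v‖ - 2 * t ^ 2 / r ≤ ‖a - d₀‖ - ‖a' - d₀‖ + ‖a' - d₁‖ - ‖a - d₁‖ ∧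
      (d₁ ≠ a →
        Metric.infDist d₀ ((affineSpan ℝ ({a, d₁} : Set (EuclideanSpace ℝ (Fin n)))) :
          Set (EuclideanSpace ℝ (Fin n))) / ‖a - d₀‖ ≤ ‖v‖) := by
  have hne {d : EuclideanSpace ℝ (Fin n)} (h : r ≤ ‖a - d‖) : d ≠ a :=
    (sub_ne_zero.mp (norm_pos_iff.mp (hr.trans_le h))).symm
  have herr : t ^ 2 / (2 * ‖a - d₀‖) ≤ 2 * t ^ 2 / r :=
    div_le_div₀ (by positivity) (by linarith [sq_nonneg t]) hr (by linarith)
  obtain ⟨hgain, hdist⟩ := stmt8_general (hne h₀) (hne h₁) hv hvne t ha'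
  exact ⟨(sub_le_sub_left herr _).trans hgain, fun _ ↦ hdist⟩
end
end

section
/- Let u : ℝ^d → ℝ be 1-Lipschitz with respect to the Euclidean norm. For k = 1, 2, let a_k, b_k ∈ ℝ^d with a_k ≠ b_k and u(a_k) − u(b_k) = ‖a_k − b_k‖, and let y_k be a point of the open segment (b_k, a_k) with u(y₁) = u(y₂). Set χ_k := (a_k − b_k)/‖a_k − b_k‖ and σ := min_{k=1,2} min(‖y_k − a_k‖, ‖y_k − b_k‖). Then ‖χ₁ − χ₂‖ ≤ ‖y₁ − y₂‖ / σ. -/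
/-!
Two rays of the same potential are cyclically monotone:
`‖a₁ - b₁‖ + ‖a₂ - b₂‖ ≤ ‖a₁ - b₂‖ + ‖a₂ - b₁‖`. By the triangle inequality this survives
shortening each ray to the segment with midpoint `yₖ` and half-length `σ`, which gives
`4 σ ≤ ‖w + σ (χ₁ + χ₂)‖ + ‖w - σ (χ₁ + χ₂)‖` for `w = y₁ - y₂`. The parallelogram law, applied
to `w, σ (χ₁ + χ₂)` and to `χ₁, χ₂`, turns this into `σ ‖χ₁ - χ₂‖ ≤ ‖w‖`.
-/

open MeasureTheory Metric Filter Topology Set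

noncomputable section

/-- `ℝ^d` with the Euclidean norm. -/
abbrev Euc (d : ℕ) := EuclideanSpace ℝ (Fin d)

open NormedSpace (normalize)

section Metric

variable {X : Type*} [PseudoMetricSpace X] {a₁ b₁ a₂ b₂ : X}

lemma dist_add_dist_le_of_lipschitzWith_one {u : X → ℝ} (hu : LipschitzWith 1 u)
    (h₁ : u a₁ - u b₁ = dist a₁ b₁) (h₂ : u a₂ - u b₂ = dist a₂ b₂) :
    dist a₁ b₁ + dist a₂ b₂ ≤ dist a₁ b₂ + dist a₂ b₁ := by
  have h₁₂ : u a₁ ≤ u b₂ + dist a₁ b₂ := by simpa using hu.le_add_mul a₁ b₂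
  have h₂₁ : u a₂ ≤ u b₁ + dist a₂ b₁ := by simpa using hu.le_add_mul a₂ b₁
  linarith

lemma dist_add_dist_le_of_subsegments {c₁ e₁ c₂ e₂ : X}
    (h : dist a₁ b₁ + dist a₂ b₂ ≤ dist a₁ b₂ + dist a₂ b₁)
    (h₁ : dist a₁ c₁ + dist c₁ e₁ + dist e₁ b₁ ≤ dist a₁ b₁)
    (h₂ : dist a₂ c₂ + dist c₂ e₂ + dist e₂ b₂ ≤ dist a₂ b₂) :
    dist c₁ e₁ + dist c₂ e₂ ≤ dist c₁ e₂ + dist c₂ e₁ := by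
  have h₁₂ := dist_triangle4 a₁ c₁ e₂ b₂
  have h₂₁ := dist_triangle4 a₂ c₂ e₁ b₁
  linarith

end Metric

section Ray

lemma dist_add_smul_add_smul {E : Type*} [SeminormedAddCommGroup E] [NormedSpace ℝ E] {χ : E}
    (hχ : ‖χ‖ = 1) (y : E) (r t : ℝ) : dist (y + r • χ) (y + t • χ) = |r - t| := by
  rw [dist_add_left, dist_eq_norm, ← sub_smul, norm_smul, hχ, mul_one, Real.norm_eq_abs]

variable {E : Type*} [NormedAddCommGroup E] [NormedSpace ℝ E] {a b y : E}

lemma add_norm_smul_normalize_of_mem_segment (hy : y ∈ segment ℝ a b) :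
    a + ‖y - a‖ • normalize (b - a) = y := by
  rw [segment_eq_image'] at hy
  obtain ⟨r, ⟨hr, -⟩, rfl⟩ := hy
  rw [add_sub_cancel_left, norm_smul, Real.norm_of_nonneg hr, mul_smul,
    NormedSpace.norm_smul_normalize]

lemma dist_add_dist_add_dist_of_mem_segment (hab : a ≠ b) (hy : y ∈ segment ℝ b a) {s : ℝ}
    (hs : 0 ≤ s) (hsa : s ≤ ‖y - a‖) (hsb : s ≤ ‖y - b‖) :
    dist a (y + s • normalize (a - b)) +
        dist (y + s • normalize (a - b)) (y + (-s) • normalize (a - b)) +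
        dist (y + (-s) • normalize (a - b)) b = dist a b := by
  have hχ : ‖normalize (a - b)‖ = 1 := NormedSpace.norm_normalize (sub_ne_zero.mpr hab)
  have ha : y + ‖y - a‖ • normalize (a - b) = a := by
    have h := add_norm_smul_normalize_of_mem_segment (segment_symm ℝ b a ▸ hy)
    rw [← neg_sub a b, NormedSpace.normalize_neg, smul_neg, ← sub_eq_add_neg] at h
    exact (sub_eq_iff_eq_add.mp h).symm
  have hb : y + (-‖y - b‖) • normalize (a - b) = b := by
    rw [neg_smul, ← sub_eq_add_neg, sub_eq_iff_eq_add, add_norm_smul_normalize_of_mem_segment hy]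
  generalize normalize (a - b) = χ at *
  generalize ‖y - a‖ = α at *
  generalize ‖y - b‖ = β at *
  subst ha hb
  simp only [dist_add_smul_add_smul hχ]
  rw [abs_of_nonneg (by linarith), abs_of_nonneg (by linarith), abs_of_nonneg (by linarith),
    abs_of_nonneg (by linarith)]
  ring

lemma norm_sub_pos_of_mem_openSegment (hab : a ≠ b) (hy : y ∈ openSegment ℝ a b) :
    0 < ‖y - a‖ := by
  rw [norm_pos_iff, sub_ne_zero]
  rintro rfl
  exact hab (left_mem_openSegment_iff.mp hy)

end Ray

section InnerProductSpace

lemma norm_sub_le_of_four_mul_norm_le {E : Type*} [SeminormedAddCommGroup E]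
    [InnerProductSpace ℝ E] {w v₁ v₂ : E} (hv : ‖v₁‖ = ‖v₂‖)
    (h : 4 * ‖v₁‖ ≤ ‖w + (v₁ + v₂)‖ + ‖w - (v₁ + v₂)‖) : ‖v₁ - v₂‖ ≤ ‖w‖ := by
  have hw := parallelogram_law_with_norm ℝ w (v₁ + v₂)
  have hv₁₂ := parallelogram_law_with_norm ℝ v₁ v₂
  rw [← hv] at hv₁₂
  have hsq : (4 * ‖v₁‖) ^ 2 ≤ 4 * (‖w‖ ^ 2 + ‖v₁ + v₂‖ ^ 2) := calc
    (4 * ‖v₁‖) ^ 2 ≤ (‖w + (v₁ + v₂)‖ + ‖w - (v₁ + v₂)‖) ^ 2 := by gcongr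
    _ ≤ 2 * (‖w + (v₁ + v₂)‖ ^ 2 + ‖w - (v₁ + v₂)‖ ^ 2) := add_sq_le
    _ = 4 * (‖w‖ ^ 2 + ‖v₁ + v₂‖ ^ 2) := by linarith
  refine le_of_sq_le_sq ?_ (norm_nonneg w)
  linarith

variable {E : Type*} [NormedAddCommGroup E] [InnerProductSpace ℝ E] {a₁ b₁ a₂ b₂ y₁ y₂ : E}

lemma mul_norm_normalize_sub_normalize_le (hab₁ : a₁ ≠ b₁) (hab₂ : a₂ ≠ b₂)
    (h : dist a₁ b₁ + dist a₂ b₂ ≤ dist a₁ b₂ + dist a₂ b₁)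
    (hy₁ : y₁ ∈ segment ℝ b₁ a₁) (hy₂ : y₂ ∈ segment ℝ b₂ a₂) {s : ℝ} (hs : 0 ≤ s)
    (ha₁ : s ≤ ‖y₁ - a₁‖) (hb₁ : s ≤ ‖y₁ - b₁‖) (ha₂ : s ≤ ‖y₂ - a₂‖) (hb₂ : s ≤ ‖y₂ - b₂‖) :
    s * ‖normalize (a₁ - b₁) - normalize (a₂ - b₂)‖ ≤ ‖y₁ - y₂‖ := by
  have hmono := dist_add_dist_le_of_subsegments h
    (dist_add_dist_add_dist_of_mem_segment hab₁ hy₁ hs ha₁ hb₁).le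
    (dist_add_dist_add_dist_of_mem_segment hab₂ hy₂ hs ha₂ hb₂).le
  have hχ₁ : ‖normalize (a₁ - b₁)‖ = 1 := NormedSpace.norm_normalize (sub_ne_zero.mpr hab₁)
  have hχ₂ : ‖normalize (a₂ - b₂)‖ = 1 := NormedSpace.norm_normalize (sub_ne_zero.mpr hab₂)
  generalize normalize (a₁ - b₁) = χ₁ at *
  generalize normalize (a₂ - b₂) = χ₂ at *
  have hnorm {χ : E} (hχ : ‖χ‖ = 1) : ‖s • χ‖ = s := by
    rw [norm_smul, hχ, mul_one, Real.norm_of_nonneg hs]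
  have h₁₂ : dist (y₁ + s • χ₁) (y₂ + (-s) • χ₂) = ‖(y₁ - y₂) + (s • χ₁ + s • χ₂)‖ := by
    rw [dist_eq_norm]
    congr 1
    module
  have h₂₁ : dist (y₂ + s • χ₂) (y₁ + (-s) • χ₁) = ‖(y₁ - y₂) - (s • χ₁ + s • χ₂)‖ := by
    rw [dist_comm, dist_eq_norm]
    congr 1
    module
  rw [dist_add_smul_add_smul hχ₁, dist_add_smul_add_smul hχ₂, abs_of_nonneg (by linarith),
    h₁₂, h₂₁] at hmono
  calc s * ‖χ₁ - χ₂‖ = ‖s • χ₁ - s • χ₂‖ := by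
        rw [← smul_sub, norm_smul, Real.norm_of_nonneg hs]
    _ ≤ ‖y₁ - y₂‖ := norm_sub_le_of_four_mul_norm_le ((hnorm hχ₁).trans (hnorm hχ₂).symm) <| by
        rw [hnorm hχ₁]
        linarith

theorem stmt11_general (hab₁ : a₁ ≠ b₁) (hab₂ : a₂ ≠ b₂)
    (h : dist a₁ b₁ + dist a₂ b₂ ≤ dist a₁ b₂ + dist a₂ b₁)
    (hy₁ : y₁ ∈ openSegment ℝ b₁ a₁) (hy₂ : y₂ ∈ openSegment ℝ b₂ a₂) {σ : ℝ}
    (hσ : σ = min (min ‖y₁ - a₁‖ ‖y₁ - b₁‖) (min ‖y₂ - a₂‖ ‖y₂ - b₂‖)) :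
    ‖(‖a₁ - b₁‖⁻¹ • (a₁ - b₁)) - (‖a₂ - b₂‖⁻¹ • (a₂ - b₂))‖ ≤ ‖y₁ - y₂‖ / σ := by
  have hσ_pos : 0 < σ := by
    rw [hσ]
    exact lt_min
      (lt_min (norm_sub_pos_of_mem_openSegment hab₁ (openSegment_symm ℝ b₁ a₁ ▸ hy₁))
        (norm_sub_pos_of_mem_openSegment hab₁.symm hy₁))
      (lt_min (norm_sub_pos_of_mem_openSegment hab₂ (openSegment_symm ℝ b₂ a₂ ▸ hy₂))
        (norm_sub_pos_of_mem_openSegment hab₂.symm hy₂))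
  obtain ⟨⟨ha₁, hb₁⟩, ha₂, hb₂⟩ :
      (σ ≤ ‖y₁ - a₁‖ ∧ σ ≤ ‖y₁ - b₁‖) ∧ σ ≤ ‖y₂ - a₂‖ ∧ σ ≤ ‖y₂ - b₂‖ := by
    simpa only [le_min_iff] using hσ.le
  rw [le_div_iff₀' hσ_pos]
  exact mul_norm_normalize_sub_normalize_le hab₁ hab₂ h (openSegment_subset_segment ℝ b₁ a₁ hy₁)
    (openSegment_subset_segment ℝ b₂ a₂ hy₂) hσ_pos.le ha₁ hb₁ ha₂ hb₂

end InnerProductSpace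

/-- Directions of transport rays crossing a common level set of a
Kantorovich potential are Lipschitz in the crossing point, with constant `1/σ`, where `σ`
is the minimal distance of the crossing points to the ray ends. -/
theorem stmt11 {d : ℕ} (u : Euc d → ℝ) (hu : LipschitzWith 1 u)
    (a₁ b₁ a₂ b₂ y₁ y₂ : Euc d)
    (hab₁ : a₁ ≠ b₁) (hab₂ : a₂ ≠ b₂)
    (hu₁ : u a₁ - u b₁ = ‖a₁ - b₁‖) (hu₂ : u a₂ - u b₂ = ‖a₂ - b₂‖)
    (hy₁ : y₁ ∈ openSegment ℝ b₁ a₁) (hy₂ : y₂ ∈ openSegment ℝ b₂ a₂)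
    (hlevel : u y₁ = u y₂)
    (σ : ℝ)
    (hσ : σ = min (min ‖y₁ - a₁‖ ‖y₁ - b₁‖) (min ‖y₂ - a₂‖ ‖y₂ - b₂‖)) :
    ‖(‖a₁ - b₁‖⁻¹ • (a₁ - b₁)) - (‖a₂ - b₂‖⁻¹ • (a₂ - b₂))‖ ≤ ‖y₁ - y₂‖ / σ :=
  stmt11_general hab₁ hab₂ (dist_add_dist_le_of_lipschitzWith_one hu
    (hu₁.trans (dist_eq_norm a₁ b₁).symm) (hu₂.trans (dist_eq_norm a₂ b₂).symm)) hy₁ hy₂ hσ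
end
end

section
/- Let 𝒳, 𝒴 ⊂ ℝ^d be compact sets, let μ and ν be Borel probability measures with supp μ = 𝒳 and supp ν = 𝒴, let π be a coupling of (μ,ν), and let u : ℝ^d → ℝ be a 1-Lipschitz function with ∫ u dμ − ∫ u dν = ∫ ‖x−y‖ dπ(x,y). Then for every x ∈ 𝒳 there exists y ∈ 𝒴 with u(x) − u(y) = ‖x−y‖, and for every y ∈ 𝒴 there exists x ∈ 𝒳 with u(x) − u(y) = ‖x−y‖. In particular, if 𝒳 ∩ 𝒴 = ∅, then every point of 𝒳 ∪ 𝒴 lies on a nondegenerate transport ray, i.e. a segment [a,b] with a ∈ 𝒳, b ∈ 𝒴, a ≠ b and u(a) − u(b) = ‖a−b‖. -/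
open MeasureTheory Metric Filter Topology Set

noncomputable section

/-- A coupling of `μ` and `ν`: a measure on the product whose marginals are `μ` and `ν`. -/
def IsCoupling {d : ℕ} (π : Measure (Euc d × Euc d)) (μ ν : Measure (Euc d)) : Prop :=
  π.map Prod.fst = μ ∧ π.map Prod.snd = ν

/-!
As `u` is 1-Lipschitz, the continuous function `‖x - y‖ - (u x - u y)` is nonnegative; its integral
against `π` vanishes, so the closed set of its zeros carries `π`. The part of this contact set over
the compact supports is compact, so its projections are closed sets carrying the marginals, and
hence contain the supports.
-/

section Support

variable {α β : Type*} [MeasurableSpace α] [MeasurableSpace β]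

lemma support_eq_of_forall_measure_ball_pos [PseudoMetricSpace α] {μ : Measure α} {s : Set α}
    (hs : IsClosed s) (hμs : μ sᶜ = 0) (hball : ∀ x ∈ s, ∀ r : ℝ, 0 < r → 0 < μ (ball x r)) :
    μ.support = s :=
  (Measure.support_subset_of_isClosed hs hμs).antisymm fun x hx ↦
    nhds_basis_ball.mem_measureSupport.2 (hball x hx)

lemma support_map_subset_image_of_isCompact [TopologicalSpace α] [TopologicalSpace β] [T2Space β]
    [OpensMeasurableSpace β] {π : Measure α} {p : α → β} (hp : Continuous p)
    (hp_meas : AEMeasurable p π) {K : Set α} (hK : IsCompact K) (hπK : ∀ᵐ z ∂π, z ∈ K) :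
    (π.map p).support ⊆ p '' K := by
  have hclosed : IsClosed (p '' K) := (hK.image hp).isClosed
  refine Measure.support_subset_of_isClosed hclosed ?_
  refine (ae_map_iff hp_meas hclosed.measurableSet).2 ?_
  filter_upwards [hπK] with z hz using mem_image_of_mem p hz

lemma ae_mem_support_prod_support [TopologicalSpace α] [TopologicalSpace β]
    [HereditarilyLindelofSpace α] [HereditarilyLindelofSpace β] (π : Measure (α × β)) :
    ∀ᵐ z ∂π, z ∈ π.fst.support ×ˢ π.snd.support := by
  have hfst : ∀ᵐ z ∂π, z.1 ∈ π.fst.support :=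
    ae_of_ae_map measurable_fst.aemeasurable Measure.support_mem_ae
  have hsnd : ∀ᵐ z ∂π, z.2 ∈ π.snd.support :=
    ae_of_ae_map measurable_snd.aemeasurable Measure.support_mem_ae
  filter_upwards [hfst, hsnd] with z hz₁ hz₂ using ⟨hz₁, hz₂⟩

end Support

lemma integrable_of_continuous_of_ae_mem_isCompact {α E : Type*} [TopologicalSpace α] [T2Space α]
    [MeasurableSpace α] [OpensMeasurableSpace α] [NormedAddCommGroup E]
    [SecondCountableTopologyEither α E] {π : Measure α} [IsFiniteMeasureOnCompacts π] {K : Set α}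
    (hK : IsCompact K) (hπK : ∀ᵐ z ∂π, z ∈ K) {f : α → E} (hf : Continuous f) :
    Integrable f π := by
  rw [← Measure.restrict_eq_self_of_ae_mem hπK]
  exact hf.continuousOn.integrableOn_compact hK

lemma integral_fst_sub_integral_snd {α β E : Type*} [MeasurableSpace α] [MeasurableSpace β]
    [NormedAddCommGroup E] [NormedSpace ℝ E] {π : Measure (α × β)} {φ : α → E} {ψ : β → E}
    (hφ : Integrable φ π.fst) (hψ : Integrable ψ π.snd) :
    ∫ x, φ x ∂π.fst - ∫ y, ψ y ∂π.snd = ∫ z, (φ z.1 - ψ z.2) ∂π := by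
  have hφ_map : ∫ x, φ x ∂π.fst = ∫ z, φ z.1 ∂π :=
    integral_map measurable_fst.aemeasurable hφ.aestronglyMeasurable
  have hψ_map : ∫ y, ψ y ∂π.snd = ∫ z, ψ z.2 ∂π :=
    integral_map measurable_snd.aemeasurable hψ.aestronglyMeasurable
  rw [hφ_map, hψ_map]
  exact (integral_sub (hφ.comp_measurable measurable_fst)
    (hψ.comp_measurable measurable_snd)).symm

/-- The contact set of the pair of potentials `(φ, ψ)` for the cost `c`: the pairs at which the dual
constraint `φ x - ψ y ≤ c (x, y)` is saturated. The second potential enters with a minus sign, so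
that for a metric cost a single 1-Lipschitz function serves as both potentials. -/
def contactSet {α β : Type*} (c : α × β → ℝ) (φ : α → ℝ) (ψ : β → ℝ) : Set (α × β) :=
  {z | φ z.1 - ψ z.2 = c z}

section Contact

variable {α β : Type*} {c : α × β → ℝ} {φ : α → ℝ} {ψ : β → ℝ}

lemma isClosed_contactSet [TopologicalSpace α] [TopologicalSpace β] (hc : Continuous c)
    (hφ : Continuous φ) (hψ : Continuous ψ) : IsClosed (contactSet c φ ψ) :=
  isClosed_eq (by fun_prop) hc

lemma ae_mem_contactSet [MeasurableSpace α] [MeasurableSpace β] {π : Measure (α × β)}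
    (hc : Integrable c π) (hφ : Integrable φ π.fst) (hψ : Integrable ψ π.snd)
    (hle : ∀ x y, φ x - ψ y ≤ c (x, y))
    (hopt : ∫ x, φ x ∂π.fst - ∫ y, ψ y ∂π.snd = ∫ z, c z ∂π) :
    ∀ᵐ z ∂π, z ∈ contactSet c φ ψ := by
  have hint : Integrable (fun z : α × β ↦ φ z.1 - ψ z.2) π :=
    (hφ.comp_measurable measurable_fst).sub (hψ.comp_measurable measurable_snd)
  rw [integral_fst_sub_integral_snd hφ hψ] at hopt
  exact (integral_eq_iff_of_ae_le hint hc (.of_forall fun z ↦ hle z.1 z.2)).1 hopt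

lemma support_map_subset_image_contactSet {γ : Type*}
    [TopologicalSpace α] [T2Space α] [SecondCountableTopology α] [MeasurableSpace α]
    [OpensMeasurableSpace α] [TopologicalSpace β] [T2Space β] [SecondCountableTopology β]
    [MeasurableSpace β] [OpensMeasurableSpace β] [TopologicalSpace γ] [T2Space γ]
    [MeasurableSpace γ] [BorelSpace γ] {π : Measure (α × β)} [IsFiniteMeasure π]
    (hfst : IsCompact π.fst.support) (hsnd : IsCompact π.snd.support) (hc : Continuous c)
    (hφ : Continuous φ) (hψ : Continuous ψ) (hle : ∀ x y, φ x - ψ y ≤ c (x, y))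
    (hopt : ∫ x, φ x ∂π.fst - ∫ y, ψ y ∂π.snd = ∫ z, c z ∂π)
    {p : α × β → γ} (hp : Continuous p) :
    (π.map p).support ⊆ p '' (π.fst.support ×ˢ π.snd.support ∩ contactSet c φ ψ) := by
  have hprod : ∀ᵐ z ∂π, z ∈ π.fst.support ×ˢ π.snd.support := ae_mem_support_prod_support π
  have hcontact : ∀ᵐ z ∂π, z ∈ contactSet c φ ψ :=
    ae_mem_contactSet
      (integrable_of_continuous_of_ae_mem_isCompact (hfst.prod hsnd) hprod hc)
      (integrable_of_continuous_of_ae_mem_isCompact hfst Measure.support_mem_ae hφ)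
      (integrable_of_continuous_of_ae_mem_isCompact hsnd Measure.support_mem_ae hψ) hle hopt
  exact support_map_subset_image_of_isCompact hp hp.aemeasurable
    ((hfst.prod hsnd).inter_right (isClosed_contactSet hc hφ hψ)) (hprod.and hcontact)

end Contact

theorem stmt12_general {E : Type*} [NormedAddCommGroup E] [NormedSpace ℝ E]
    [SecondCountableTopology E] [MeasurableSpace E] [BorelSpace E]
    {π : Measure (E × E)} [IsFiniteMeasure π] {X Y : Set E}
    (hX : IsCompact X) (hY : IsCompact Y) (hπX : π.fst.support = X) (hπY : π.snd.support = Y)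
    {u : E → ℝ} (hu : LipschitzWith 1 u)
    (hopt : (∫ x, u x ∂π.fst) - ∫ y, u y ∂π.snd = ∫ z, ‖z.1 - z.2‖ ∂π) :
    (∀ x ∈ X, ∃ y ∈ Y, u x - u y = ‖x - y‖) ∧
    (∀ y ∈ Y, ∃ x ∈ X, u x - u y = ‖x - y‖) ∧
    (Disjoint X Y → ∀ z ∈ X ∪ Y, ∃ a ∈ X, ∃ b ∈ Y,
      a ≠ b ∧ u a - u b = ‖a - b‖ ∧ z ∈ segment ℝ a b) := by
  subst hπX hπY
  have hle (x y : E) : u x - u y ≤ ‖x - y‖ :=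
    sub_le_iff_le_add'.2 (by simpa [dist_eq_norm] using hu.le_add_mul x y)
  have hcover {p : E × E → E} (hp : Continuous p) :=
    support_map_subset_image_contactSet (c := fun z ↦ ‖z.1 - z.2‖) hX hY (by fun_prop)
      hu.continuous hu.continuous hle hopt hp
  have hcontactX : ∀ x ∈ π.fst.support, ∃ y ∈ π.snd.support, u x - u y = ‖x - y‖ := by
    intro x hx
    obtain ⟨⟨x, y⟩, ⟨⟨-, hy⟩, hxy⟩, rfl⟩ := hcover continuous_fst hx
    exact ⟨y, hy, hxy⟩
  have hcontactY : ∀ y ∈ π.snd.support, ∃ x ∈ π.fst.support, u x - u y = ‖x - y‖ := by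
    intro y hy
    obtain ⟨⟨x, y⟩, ⟨⟨hx, -⟩, hxy⟩, rfl⟩ := hcover continuous_snd hy
    exact ⟨x, hx, hxy⟩
  refine ⟨hcontactX, hcontactY, fun hdisj z hz ↦ ?_⟩
  rcases hz with hz | hz
  · obtain ⟨y, hy, hzy⟩ := hcontactX z hz
    exact ⟨z, hz, y, hy, hdisj.ne_of_mem hz hy, hzy, left_mem_segment ℝ z y⟩
  · obtain ⟨x, hx, hxz⟩ := hcontactY z hz
    exact ⟨x, hx, z, hz, hdisj.ne_of_mem hx hz, hxz, right_mem_segment ℝ x z⟩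

/-- If `u` is a Kantorovich potential certifying optimality of a coupling
of measures with full supports `𝒳` and `𝒴`, then every point of `𝒳` (resp. `𝒴`) is linked by
a contact pair to a point of `𝒴` (resp. `𝒳`); in particular, if `𝒳 ∩ 𝒴 = ∅`, every point of
`𝒳 ∪ 𝒴` lies on a nondegenerate transport ray. -/
theorem stmt12 {d : ℕ} (X Y : Set (Euc d)) (hX : IsCompact X) (hY : IsCompact Y)
    (μ ν : Measure (Euc d)) (hμP : IsProbabilityMeasure μ) (hνP : IsProbabilityMeasure ν)
    (hμX : μ Xᶜ = 0) (hνY : ν Yᶜ = 0)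
    (hμsupp : ∀ x ∈ X, ∀ r : ℝ, 0 < r → 0 < μ (Metric.ball x r))
    (hνsupp : ∀ y ∈ Y, ∀ r : ℝ, 0 < r → 0 < ν (Metric.ball y r))
    (π : Measure (Euc d × Euc d)) (hπ : IsCoupling π μ ν)
    (u : Euc d → ℝ) (hu : LipschitzWith 1 u)
    (hopt : (∫ x, u x ∂μ) - ∫ y, u y ∂ν = ∫ z, ‖z.1 - z.2‖ ∂π) :
    (∀ x ∈ X, ∃ y ∈ Y, u x - u y = ‖x - y‖) ∧
    (∀ y ∈ Y, ∃ x ∈ X, u x - u y = ‖x - y‖) ∧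
    (Disjoint X Y → ∀ z ∈ X ∪ Y, ∃ a ∈ X, ∃ b ∈ Y,
      a ≠ b ∧ u a - u b = ‖a - b‖ ∧ z ∈ segment ℝ a b) := by
  obtain ⟨rfl, rfl⟩ := hπ
  have : IsFiniteMeasure π := Measure.isFiniteMeasure_of_map measurable_fst.aemeasurable
  exact stmt12_general hX hY (support_eq_of_forall_measure_ball_pos hX.isClosed hμX hμsupp)
    (support_eq_of_forall_measure_ball_pos hY.isClosed hνY hνsupp) hu hopt
end
end

section
/- Let S and T be compact metric spaces equipped with Borel probability measures μ₀ and ν₀, and let F : S × T → ℝ be continuous with 0 < m ≤ F(x,y) ≤ M for all (x,y) and some constants m, M. Then there exist bounded Borel functions 𝔣 : S → ℝ and 𝔤 : T → ℝ satisfying the Schrödinger system 𝔣(x) + log ∫_T F(x,y) e^{𝔤(y)} dν₀(y) = 0 for all x ∈ S and 𝔤(y) + log ∫_S F(x,y) e^{𝔣(x)} dμ₀(x) = 0 for all y ∈ T. Moreover, the measure on S × T with density (x,y) ↦ F(x,y) e^{𝔣(x)+𝔤(y)} with respect to μ₀ ⊗ ν₀ is a probability measure whose first marginal is μ₀ and whose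 second marginal is ν₀; and the pair (𝔣,𝔤) is unique up to replacing it by (𝔣 + s, 𝔤 − s) for a constant s ∈ ℝ, in the sense of μ₀-a.e. and ν₀-a.e. equality. -/
open MeasureTheory Metric Filter Topology Set

noncomputable section

/-! Write `F = exp c`. The Schrödinger system says that `f = L g` and `g = N f`, where
`L g x = -log ∫ exp (c x y + g y) dν(y)` and `N` is the analogous transform for `μ`. Since
`L g' x - L g x = -log E_x[exp (g' - g)]`, where `E_x` is the expectation under `ν` tilted by
`c x + g`, and the tilted measures for any two `x` dominate one another up to a factor `ε > 0`,
concavity of `log` shows that `L` shrinks oscillations by the factor `1 - ε`. Hence `L ∘ N` has a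
fixed point modulo constants, unique modulo constants; computing the total mass of
`exp (c + f + g)` in both orders shows that the additive constant is zero. -/

section Oscillation

variable {α : Type*}

/-- The oscillation `sup h - inf h` of `h` is at most `D`. Stated pointwise, so that no supremum
of a possibly unbounded function occurs. -/
def OscLE (h : α → ℝ) (D : ℝ) : Prop := ∀ x y, h x - h y ≤ D

namespace OscLE

variable {h h' : α → ℝ} {D D' : ℝ}

lemma add (hh : OscLE h D) (hh' : OscLE h' D') : OscLE (h + h') (D + D') := fun x y => by
  simp only [Pi.add_apply]
  linarith [hh x y, hh' x y]

lemma neg (hh : OscLE h D) : OscLE (-h) D := fun x y => by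
  simp only [Pi.neg_apply]
  linarith [hh y x]

lemma of_abs_sub_le (s : ℝ) (hh : ∀ x, |h x - s| ≤ D) : OscLE h (2 * D) := fun x y => by
  linarith [(abs_le.1 (hh x)).2, (abs_le.1 (hh y)).1]

lemma exists_forall_mem_Icc [Nonempty α] (hh : OscLE h D) : ∃ a, ∀ x, h x ∈ Icc a (a + D) := by
  inhabit α
  have hbdd : BddBelow (range h) :=
    ⟨h default - D, by rintro _ ⟨x, rfl⟩; linarith [hh default x]⟩
  refine ⟨⨅ x, h x, fun x => ⟨ciInf_le hbdd x, ?_⟩⟩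
  linarith [le_ciInf fun y => sub_le_comm.1 (hh x y)]

lemma exists_eq_const_of_tendsto_zero [Nonempty α] {a : ℕ → ℝ} (hh : ∀ n, OscLE h (a n))
    (ha : Tendsto a atTop (𝓝 0)) : ∃ s, ∀ x, h x = s := by
  inhabit α
  have hle (x y : α) : h x - h y ≤ 0 := ge_of_tendsto' ha fun n => hh n x y
  exact ⟨h default, fun x => le_antisymm (sub_nonpos.1 (hle _ _)) (sub_nonpos.1 (hle _ _))⟩

end OscLE

end Oscillation

section BoundedMeasurable

variable {α β : Type*} [MeasurableSpace α] [MeasurableSpace β]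

/-- Bounded measurable real functions: the class in which the potentials are sought. -/
structure BddMeasurable (f : α → ℝ) : Prop where
  measurable : Measurable f
  exists_abs_le : ∃ B, ∀ x, |f x| ≤ B

namespace BddMeasurable

variable {f f' : α → ℝ}

lemma const (s : ℝ) : BddMeasurable fun _ : α => s :=
  ⟨measurable_const, |s|, fun _ => le_rfl⟩

lemma add (hf : BddMeasurable f) (hf' : BddMeasurable f') : BddMeasurable (f + f') := by
  obtain ⟨B, hB⟩ := hf.exists_abs_le
  obtain ⟨B', hB'⟩ := hf'.exists_abs_le
  exact ⟨hf.measurable.add hf'.measurable, B + B',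
    fun x => (abs_add_le _ _).trans (add_le_add (hB x) (hB' x))⟩

lemma neg (hf : BddMeasurable f) : BddMeasurable (-f) := by
  obtain ⟨B, hB⟩ := hf.exists_abs_le
  exact ⟨hf.measurable.neg, B, fun x => (abs_neg (f x)).trans_le (hB x)⟩

lemma sub (hf : BddMeasurable f) (hf' : BddMeasurable f') : BddMeasurable (f - f') :=
  sub_eq_add_neg f f' ▸ hf.add hf'.neg

lemma comp {φ : β → α} (hf : BddMeasurable f) (hφ : Measurable φ) : BddMeasurable (f ∘ φ) := by
  obtain ⟨B, hB⟩ := hf.exists_abs_le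
  exact ⟨hf.measurable.comp hφ, B, fun x => hB (φ x)⟩

lemma exists_oscLE (hf : BddMeasurable f) : ∃ D, OscLE f D := by
  obtain ⟨B, hB⟩ := hf.exists_abs_le
  exact ⟨2 * B, .of_abs_sub_le 0 (by simpa only [sub_zero] using hB)⟩

lemma integrable_exp (hf : BddMeasurable f) (μ : Measure α) [IsFiniteMeasure μ] :
    Integrable (fun x => Real.exp (f x)) μ := by
  obtain ⟨B, hB⟩ := hf.exists_abs_le
  refine .of_bound (C := Real.exp B) hf.measurable.exp.aestronglyMeasurable
    (ae_of_all _ fun x => ?_)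
  rw [Real.norm_of_nonneg (Real.exp_pos _).le]
  exact Real.exp_le_exp.2 (le_of_abs_le (hB x))

end BddMeasurable

lemma exists_bddMeasurable_oscLE_sub [Nonempty α] {u : ℕ → α → ℝ} {D θ : ℝ} (hθ : θ < 1)
    (hu : ∀ n, BddMeasurable (u n)) (hosc : ∀ n, OscLE (u (n + 1) - u n) (D * θ ^ n)) :
    ∃ f, BddMeasurable f ∧ ∀ n, OscLE (f - u n) (2 * (D * θ ^ n / (1 - θ))) := by
  inhabit α
  set v : ℕ → α → ℝ := fun n x => u n x - u n default with hv
  have hv_bdd (n : ℕ) : BddMeasurable (v n) := (hu n).sub (.const _)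
  have hdist (x : α) (n : ℕ) : dist (v n x) (v (n + 1) x) ≤ D * θ ^ n := by
    have h₁ := hosc n x default
    have h₂ := hosc n default x
    simp only [Pi.sub_apply] at h₁ h₂
    rw [Real.dist_eq, abs_le]
    constructor <;> linarith
  choose f hf using fun x => cauchySeq_tendsto_of_complete
    (cauchySeq_of_le_geometric θ D hθ (hdist x))
  have hvf (n : ℕ) (x : α) : |v n x - f x| ≤ D * θ ^ n / (1 - θ) :=
    dist_le_of_le_geometric_of_tendsto θ D hθ (hdist x) (hf x) n
  obtain ⟨B, hB⟩ := (hv_bdd 0).exists_abs_le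
  refine ⟨f, ⟨measurable_of_tendsto_metrizable (fun n => (hv_bdd n).measurable)
    (tendsto_pi_nhds.2 hf), B + D * θ ^ 0 / (1 - θ), fun x => ?_⟩, fun n => ?_⟩
  · linarith [abs_sub_abs_le_abs_sub (f x) (v 0 x), abs_sub_comm (f x) (v 0 x), hB x, hvf 0 x]
  · refine .of_abs_sub_le (-u n default) fun x => ?_
    rw [show (f - u n) x - -u n default = f x - v n x by simp only [hv, Pi.sub_apply]; ring,
      abs_sub_comm]
    exact hvf n x

end BoundedMeasurable

section OscillationContraction

variable {α β γ : Type*} [MeasurableSpace α] [MeasurableSpace β] [MeasurableSpace γ]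

/-- A map between spaces of functions that preserves bounded measurable functions and contracts
the oscillation of their differences by the factor `θ < 1`. This is Banach's contraction
condition for functions modulo additive constants. -/
structure OscContracting (θ : ℝ) (Ψ : (α → ℝ) → β → ℝ) : Prop where
  nonneg : 0 ≤ θ
  lt_one : θ < 1
  bddMeasurable {f : α → ℝ} : BddMeasurable f → BddMeasurable (Ψ f)
  oscLE {f f' : α → ℝ} {D : ℝ} :
    BddMeasurable f → BddMeasurable f' → OscLE (f' - f) D → OscLE (Ψ f' - Ψ f) (θ * D)

namespace OscContracting

lemma comp {θ θ' : ℝ} {Ψ : (β → ℝ) → γ → ℝ} {Φ : (α → ℝ) → β → ℝ} (hΨ : OscContracting θ Ψ)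
    (hΦ : OscContracting θ' Φ) : OscContracting (θ * θ') (Ψ ∘ Φ) where
  nonneg := mul_nonneg hΨ.nonneg hΦ.nonneg
  lt_one := mul_lt_one_of_nonneg_of_lt_one_left hΨ.nonneg hΨ.lt_one hΦ.lt_one.le
  bddMeasurable hf := hΨ.bddMeasurable (hΦ.bddMeasurable hf)
  oscLE hf hf' h := by
    rw [mul_assoc]
    exact hΨ.oscLE (hΦ.bddMeasurable hf) (hΦ.bddMeasurable hf') (hΦ.oscLE hf hf' h)

variable {θ D : ℝ} {Ψ : (α → ℝ) → α → ℝ} {f f' : α → ℝ}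

lemma bddMeasurable_iterate (hΨ : OscContracting θ Ψ) (hf : BddMeasurable f) (n : ℕ) :
    BddMeasurable (Ψ^[n] f) :=
  Function.Iterate.rec BddMeasurable hf (fun _ => hΨ.bddMeasurable) n

lemma oscLE_iterate (hΨ : OscContracting θ Ψ) (hf : BddMeasurable f) (hf' : BddMeasurable f')
    (h : OscLE (f' - f) D) (n : ℕ) : OscLE (Ψ^[n] f' - Ψ^[n] f) (D * θ ^ n) := by
  induction n with
  | zero => simpa only [Function.iterate_zero, id, pow_zero, mul_one] using h
  | succ n ih =>
    rw [Function.iterate_succ_apply', Function.iterate_succ_apply', pow_succ',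
      mul_left_comm]
    exact hΨ.oscLE (hΨ.bddMeasurable_iterate hf n) (hΨ.bddMeasurable_iterate hf' n) ih

lemma tendsto_mul_pow (hΨ : OscContracting θ Ψ) (D : ℝ) :
    Tendsto (fun n : ℕ => D * θ ^ n) atTop (𝓝 0) := by
  simpa only [mul_zero] using
    (tendsto_pow_atTop_nhds_zero_of_lt_one hΨ.nonneg hΨ.lt_one).const_mul D

theorem exists_apply_eq_add_const [Nonempty α] (hΨ : OscContracting θ Ψ) :
    ∃ f, BddMeasurable f ∧ ∃ s, ∀ x, Ψ f x = f x + s := by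
  set u : ℕ → α → ℝ := fun n => Ψ^[n] 0
  have hu (n : ℕ) : BddMeasurable (u n) := hΨ.bddMeasurable_iterate (.const 0) n
  obtain ⟨D, hD⟩ := ((hu 1).sub (hu 0)).exists_oscLE
  obtain ⟨f, hf, hfu⟩ := exists_bddMeasurable_oscLE_sub hΨ.lt_one hu
    (hΨ.oscLE_iterate (hu 0) (hu 1) hD)
  have hosc (n : ℕ) : OscLE (Ψ f - f)
      (θ * (2 * (D * θ ^ n / (1 - θ))) + 2 * (D * θ ^ (n + 1) / (1 - θ))) := by
    have h := (hΨ.oscLE (hu n) hf (hfu n)).add (hfu (n + 1)).neg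
    rwa [show Ψ (u n) = u (n + 1) from (Function.iterate_succ_apply' Ψ n 0).symm, neg_sub,
      sub_add_sub_cancel] at h
  obtain ⟨s, hs⟩ := OscLE.exists_eq_const_of_tendsto_zero hosc <| by
    convert hΨ.tendsto_mul_pow (4 * D * θ / (1 - θ)) using 2 with n
    ring
  exact ⟨f, hf, s, fun x => sub_eq_iff_eq_add'.1 (hs x)⟩

theorem exists_eq_add_const_of_isFixedPt [Nonempty α] (hΨ : OscContracting θ Ψ)
    (hf : BddMeasurable f) (hf' : BddMeasurable f') (h : Function.IsFixedPt Ψ f)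
    (h' : Function.IsFixedPt Ψ f') : ∃ s, ∀ x, f' x = f x + s := by
  obtain ⟨D, hD⟩ := (hf'.sub hf).exists_oscLE
  have hosc (n : ℕ) : OscLE (f' - f) (D * θ ^ n) := by
    simpa only [(h.iterate n).eq, (h'.iterate n).eq] using hΨ.oscLE_iterate hf hf' hD n
  obtain ⟨s, hs⟩ := OscLE.exists_eq_const_of_tendsto_zero hosc (hΨ.tendsto_mul_pow D)
  exact ⟨s, fun x => sub_eq_iff_eq_add'.1 (hs x)⟩

end OscContracting

end OscillationContraction

section TiltedMeasures

variable {α : Type*} [MeasurableSpace α]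

lemma abs_log_integral_exp_le {p : Measure α} [IsProbabilityMeasure p] {h : α → ℝ} {B : ℝ}
    (hh : BddMeasurable h) (hB : ∀ x, |h x| ≤ B) : |Real.log (∫ x, Real.exp (h x) ∂p)| ≤ B := by
  have hpos := integral_exp_pos (hh.integrable_exp p)
  have hlow : Real.exp (-B) ≤ ∫ x, Real.exp (h x) ∂p := by
    simpa using integral_mono (μ := p) (integrable_const _) (hh.integrable_exp p)
      fun x => Real.exp_le_exp.2 (neg_le_of_abs_le (hB x))
  have hupp : ∫ x, Real.exp (h x) ∂p ≤ Real.exp B := by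
    simpa using integral_mono (μ := p) (hh.integrable_exp p) (integrable_const _)
      fun x => Real.exp_le_exp.2 (le_of_abs_le (hB x))
  exact abs_le.2 ⟨(Real.le_log_iff_exp_le hpos).2 hlow, (Real.log_le_iff_le_exp hpos).2 hupp⟩

lemma log_integral_exp_tilted {μ : Measure α} [IsProbabilityMeasure μ] {f g : α → ℝ}
    (hf : BddMeasurable f) (hg : BddMeasurable g) :
    Real.log (∫ x, Real.exp ((g - f) x) ∂μ.tilted f) =
      Real.log (∫ x, Real.exp (g x) ∂μ) - Real.log (∫ x, Real.exp (f x) ∂μ) := by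
  rw [integral_exp_tilted, add_sub_cancel, Real.log_div (integral_exp_pos (hg.integrable_exp μ)).ne'
    (integral_exp_pos (hf.integrable_exp μ)).ne']

lemma ofReal_exp_smul_tilted_le_tilted {μ : Measure α} [IsProbabilityMeasure μ] {f g : α → ℝ}
    {Δ : ℝ} (hf : BddMeasurable f) (hg : BddMeasurable g) (hΔ : ∀ x, |f x - g x| ≤ Δ) :
    ENNReal.ofReal (Real.exp (-(2 * Δ))) • μ.tilted f ≤ μ.tilted g := by
  have hZf := integral_exp_pos (hf.integrable_exp μ)
  have hZg := integral_exp_pos (hg.integrable_exp μ)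
  have hZ : ∫ x, Real.exp (g x) ∂μ ≤ Real.exp Δ * ∫ x, Real.exp (f x) ∂μ := by
    rw [← integral_const_mul]
    refine integral_mono (hg.integrable_exp μ) ((hf.integrable_exp μ).const_mul _) fun x => ?_
    simp only [← Real.exp_add]
    exact Real.exp_le_exp.2 (by linarith [(abs_le.1 (hΔ x)).1])
  rw [Measure.tilted, Measure.tilted, ← withDensity_smul' _ _ ENNReal.ofReal_ne_top]
  refine withDensity_mono (ae_of_all _ fun x => ?_)
  rw [Pi.smul_apply, smul_eq_mul, ← ENNReal.ofReal_mul (Real.exp_pos _).le]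
  refine ENNReal.ofReal_le_ofReal ?_
  rw [← mul_div_assoc, div_le_div_iff₀ hZf hZg]
  calc Real.exp (-(2 * Δ)) * Real.exp (f x) * ∫ x, Real.exp (g x) ∂μ
      ≤ Real.exp (-(2 * Δ)) * Real.exp (f x) * (Real.exp Δ * ∫ x, Real.exp (f x) ∂μ) := by gcongr
    _ = Real.exp (f x - Δ) * ∫ x, Real.exp (f x) ∂μ := by
        rw [← mul_assoc, ← Real.exp_add, ← Real.exp_add]
        ring_nf
    _ ≤ Real.exp (g x) * ∫ x, Real.exp (f x) ∂μ := by
        gcongr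
        linarith [(abs_le.1 (hΔ x)).2]

/-- With `h ≥ a`, domination gives `E_q[exp h] ≥ ε E_p[exp h] + (1 - ε) exp a`, and concavity of
the logarithm turns this into the claim. -/
theorem log_integral_exp_sub_le_of_smul_le {p q : Measure α} [IsProbabilityMeasure p]
    [IsProbabilityMeasure q] {ε D : ℝ} {h : α → ℝ} (hε : 0 ≤ ε)
    (hpq : ENNReal.ofReal ε • p ≤ q) (hh : BddMeasurable h) (hD : OscLE h D) :
    Real.log (∫ x, Real.exp (h x) ∂p) - Real.log (∫ x, Real.exp (h x) ∂q) ≤ (1 - ε) * D := by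
  have : Nonempty α := nonempty_of_isProbabilityMeasure p
  obtain ⟨a, ha⟩ := hD.exists_forall_mem_Icc
  have hε1 : ε ≤ 1 := by simpa using hpq univ
  have hint (r : Measure α) [IsProbabilityMeasure r] :
      Integrable (fun x => Real.exp (h x) - Real.exp a) r :=
    (hh.integrable_exp r).sub (integrable_const _)
  have hsub (r : Measure α) [IsProbabilityMeasure r] :
      ∫ x, Real.exp (h x) - Real.exp a ∂r = (∫ x, Real.exp (h x) ∂r) - Real.exp a := by
    simp [integral_sub (hh.integrable_exp r) (integrable_const _)]
  set P := ∫ x, Real.exp (h x) ∂p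
  set Q := ∫ x, Real.exp (h x) ∂q
  have hP : 0 < P := integral_exp_pos (hh.integrable_exp p)
  have hmix : ε * P + (1 - ε) * Real.exp a ≤ Q := by
    have hmono := integral_mono_measure hpq
      (ae_of_all _ fun x => sub_nonneg.2 (Real.exp_le_exp.2 (ha x).1)) (hint q)
    rw [integral_smul_measure, ENNReal.toReal_ofReal hε, hsub, hsub, smul_eq_mul] at hmono
    linarith
  have hlog : ε * Real.log P + (1 - ε) * a ≤ Real.log Q := by
    have hconc := strictConcaveOn_log_Ioi.concaveOn.2 (mem_Ioi.2 hP) (mem_Ioi.2 (Real.exp_pos a))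
      hε (sub_nonneg.2 hε1) (add_sub_cancel _ _)
    simp only [smul_eq_mul, Real.log_exp] at hconc
    have hmix_pos : 0 < ε * P + (1 - ε) * Real.exp a :=
      convex_Ioi (0 : ℝ) hP (Real.exp_pos a) hε (sub_nonneg.2 hε1) (add_sub_cancel _ _)
    exact hconc.trans (Real.log_le_log hmix_pos hmix)
  have hPle : Real.log P ≤ a + D := by
    refine (Real.log_le_iff_le_exp hP).2 ?_
    simpa using integral_mono (μ := p) (hh.integrable_exp p) (integrable_const _)
      fun x => Real.exp_le_exp.2 (ha x).2
  linarith [mul_le_mul_of_nonneg_left hPle (sub_nonneg.2 hε1)]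

end TiltedMeasures

section SoftTransform

variable {α β : Type*} [MeasurableSpace β]

/-- The soft (entropic) `c`-transform of `g`, i.e. one half of a Sinkhorn iteration; `c` is the
logarithm of the kernel `F`. -/
def softTransform (ν : Measure β) (c : α → β → ℝ) (g : β → ℝ) (x : α) : ℝ :=
  -Real.log (∫ y, Real.exp (c x y + g y) ∂ν)

lemma softTransform_log_eq_iff {ν : Measure β} {g : β → ℝ} {F : α × β → ℝ} (hF : ∀ z, 0 < F z)
    {x : α} {t : ℝ} :
    softTransform ν (fun x y => Real.log (F (x, y))) g x = t ↔
      t + Real.log (∫ y, F (x, y) * Real.exp (g y) ∂ν) = 0 := by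
  simp only [softTransform, Real.exp_add, Real.exp_log (hF _)]
  rw [eq_comm, add_eq_zero_iff_eq_neg]

variable [MeasurableSpace α] {ν : Measure β} [IsProbabilityMeasure ν] {c : α → β → ℝ} {g : β → ℝ}

lemma BddMeasurable.uncurry_apply (hc : BddMeasurable (Function.uncurry c)) (x : α) :
    BddMeasurable (c x) :=
  hc.comp measurable_prodMk_left

lemma BddMeasurable.uncurry_flip (hc : BddMeasurable (Function.uncurry c)) :
    BddMeasurable (Function.uncurry (flip c)) :=
  hc.comp measurable_swap

lemma bddMeasurable_softTransform (hc : BddMeasurable (Function.uncurry c))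
    (hg : BddMeasurable g) : BddMeasurable (softTransform ν c g) := by
  have hcg : BddMeasurable fun z : α × β => c z.1 z.2 + g z.2 := hc.add (hg.comp measurable_snd)
  obtain ⟨B, hB⟩ := hcg.exists_abs_le
  refine ⟨?_, B, fun x => ?_⟩
  · exact (hcg.measurable.exp.stronglyMeasurable.integral_prod_right').measurable.log.neg
  · rw [softTransform, abs_neg]
    exact abs_log_integral_exp_le ((hc.uncurry_apply x).add hg) fun y => hB (x, y)

lemma softTransform_add_const (hc : BddMeasurable (Function.uncurry c)) (hg : BddMeasurable g)
    (s : ℝ) (x : α) : softTransform ν c (fun y => g y + s) x = softTransform ν c g x - s := by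
  have hpos := integral_exp_pos (((hc.uncurry_apply x).add hg).integrable_exp ν)
  simp only [Pi.add_apply] at hpos
  simp only [softTransform, ← add_assoc, Real.exp_add _ s, integral_mul_const]
  rw [Real.log_mul hpos.ne' (Real.exp_pos s).ne', Real.log_exp, neg_add']

theorem exists_oscContracting_softTransform (ν : Measure β) [IsProbabilityMeasure ν]
    (hc : BddMeasurable (Function.uncurry c)) :
    ∃ θ, OscContracting θ (softTransform ν c) := by
  obtain ⟨Δ, hΔ⟩ := hc.exists_oscLE
  refine ⟨1 - Real.exp (-(2 * |Δ|)), ?_, ?_, bddMeasurable_softTransform hc,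
    fun {g g' D} hg hg' hD x' x => ?_⟩
  · exact sub_nonneg.2 (Real.exp_le_one_iff.2 (by simp))
  · exact sub_lt_self _ (Real.exp_pos _)
  · have hcg (x : α) := (hc.uncurry_apply x).add hg
    have hcg' (x : α) := (hc.uncurry_apply x).add hg'
    have (x : α) := isProbabilityMeasure_tilted ((hcg x).integrable_exp ν)
    have hdom := ofReal_exp_smul_tilted_le_tilted (μ := ν) (Δ := |Δ|) (hcg x) (hcg x') fun y => by
      simp only [Pi.add_apply, add_sub_add_right_eq_sub]
      exact (abs_le.2 ⟨by linarith [hΔ (x', y) (x, y)], hΔ (x, y) (x', y)⟩).trans (le_abs_self _)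
    have hkey := log_integral_exp_sub_le_of_smul_le (Real.exp_pos _).le hdom (hg'.sub hg) hD
    have hratio (x : α) := log_integral_exp_tilted (μ := ν) (hcg x) (hcg' x)
    simp only [add_sub_add_left_eq_sub] at hratio
    rw [hratio, hratio] at hkey
    simp only [Pi.sub_apply, Pi.add_apply, softTransform] at hkey ⊢
    linarith

lemma lintegral_exp_add_add (hc : BddMeasurable (Function.uncurry c)) (hg : BddMeasurable g)
    (t : ℝ) (x : α) :
    ∫⁻ y, ENNReal.ofReal (Real.exp (c x y + (t + g y))) ∂ν =
      ENNReal.ofReal (Real.exp (t - softTransform ν c g x)) := by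
  have hint := ((hc.uncurry_apply x).add hg).integrable_exp ν
  have hpos := integral_exp_pos hint
  simp only [Pi.add_apply] at hint hpos
  simp only [add_left_comm (c x _), Real.exp_add t]
  rw [← ofReal_integral_eq_lintegral_ofReal (hint.const_mul _)
    (ae_of_all _ fun y => by positivity), integral_const_mul, softTransform, sub_neg_eq_add,
    Real.exp_add, Real.exp_log hpos]

end SoftTransform

section SchrodingerSystem

variable {α β : Type*}

/-- The density `exp (c + f + g)` with respect to `μ.prod ν` of the coupling defined by the
potentials `f` and `g`. -/
def couplingDensity (c : α → β → ℝ) (f : α → ℝ) (g : β → ℝ) (z : α × β) : ENNReal :=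
  ENNReal.ofReal (Real.exp (c z.1 z.2 + (f z.1 + g z.2)))

lemma couplingDensity_log {F : α × β → ℝ} (hF : ∀ z, 0 < F z) (f : α → ℝ) (g : β → ℝ) (z : α × β) :
    couplingDensity (fun x y => Real.log (F (x, y))) f g z =
      ENNReal.ofReal (F z * Real.exp (f z.1 + g z.2)) := by
  rw [couplingDensity, Real.exp_add, Real.exp_log (hF z)]

variable [MeasurableSpace α] [MeasurableSpace β]

lemma fst_withDensity_prod {μ : Measure α} {ν : Measure β} [SFinite μ] [SFinite ν]
    {ρ : α × β → ENNReal} (hρ : Measurable ρ) (h : ∀ x, ∫⁻ y, ρ (x, y) ∂ν = 1) :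
    ((μ.prod ν).withDensity ρ).fst = μ := by
  ext A hA
  rw [Measure.fst_apply hA, withDensity_apply _ (measurable_fst hA), ← prod_univ,
    ← Measure.prod_restrict, Measure.restrict_univ, lintegral_prod _ hρ.aemeasurable]
  simp [h]

lemma snd_withDensity_prod {μ : Measure α} {ν : Measure β} [SFinite μ] [SFinite ν]
    {ρ : α × β → ENNReal} (hρ : Measurable ρ) (h : ∀ y, ∫⁻ x, ρ (x, y) ∂μ = 1) :
    ((μ.prod ν).withDensity ρ).snd = ν := by
  ext A hA
  rw [Measure.snd_apply hA, withDensity_apply _ (measurable_snd hA), ← univ_prod,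
    ← Measure.prod_restrict, Measure.restrict_univ, lintegral_prod_symm _ hρ.aemeasurable]
  simp [h]

/-- Bounded solutions `(f, g)` of the Schrödinger system for the kernel `exp c` and the marginals
`μ`, `ν`. -/
structure IsSchrodingerPair (μ : Measure α) (ν : Measure β) (c : α → β → ℝ) (f : α → ℝ)
    (g : β → ℝ) : Prop where
  left : BddMeasurable f
  right : BddMeasurable g
  softTransform_right : softTransform ν c g = f
  softTransform_left : softTransform μ (flip c) f = g

variable {μ : Measure α} {ν : Measure β} {c : α → β → ℝ} {f f' : α → ℝ} {g g' : β → ℝ}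

section Kernel

variable {F : α × β → ℝ}

lemma bddMeasurable_uncurry_log {m M : ℝ} (hF : Measurable F) (hm : 0 < m)
    (hFb : ∀ z, m ≤ F z ∧ F z ≤ M) :
    BddMeasurable (Function.uncurry fun x y => Real.log (F (x, y))) :=
  ⟨hF.log, max |Real.log m| |Real.log M|, fun z => abs_le_max_abs_abs
    (Real.log_le_log hm (hFb z).1) (Real.log_le_log (hm.trans_le (hFb z).1) (hFb z).2)⟩

lemma isSchrodingerPair_log_iff (hF : ∀ z, 0 < F z) :
    IsSchrodingerPair μ ν (fun x y => Real.log (F (x, y))) f g ↔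
      BddMeasurable f ∧ BddMeasurable g ∧
      (∀ x, f x + Real.log (∫ y, F (x, y) * Real.exp (g y) ∂ν) = 0) ∧
      (∀ y, g y + Real.log (∫ x, F (x, y) * Real.exp (f x) ∂μ) = 0) := by
  have hF' (z : β × α) : 0 < (F ∘ Prod.swap) z := hF z.swap
  exact ⟨fun h => ⟨h.left, h.right,
      fun x => (softTransform_log_eq_iff hF).1 (congrFun h.softTransform_right x),
      fun y => (softTransform_log_eq_iff hF').1 (congrFun h.softTransform_left y)⟩,
    fun ⟨hf, hg, hfg, hgf⟩ => ⟨hf, hg,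
      funext fun x => (softTransform_log_eq_iff hF).2 (hfg x),
      funext fun y => (softTransform_log_eq_iff hF').2 (hgf y)⟩⟩

end Kernel

lemma measurable_couplingDensity (hc : BddMeasurable (Function.uncurry c)) (hf : BddMeasurable f)
    (hg : BddMeasurable g) : Measurable (couplingDensity c f g) :=
  (hc.measurable.add ((hf.measurable.comp measurable_fst).add
    (hg.measurable.comp measurable_snd))).exp.ennreal_ofReal

lemma lintegral_couplingDensity_right [IsProbabilityMeasure ν]
    (hc : BddMeasurable (Function.uncurry c)) (hg : BddMeasurable g) (x : α) :
    ∫⁻ y, couplingDensity c f g (x, y) ∂ν =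
      ENNReal.ofReal (Real.exp (f x - softTransform ν c g x)) :=
  lintegral_exp_add_add hc hg (f x) x

lemma lintegral_couplingDensity_left [IsProbabilityMeasure μ]
    (hc : BddMeasurable (Function.uncurry c)) (hf : BddMeasurable f) (y : β) :
    ∫⁻ x, couplingDensity c f g (x, y) ∂μ =
      ENNReal.ofReal (Real.exp (g y - softTransform μ (flip c) f y)) := by
  simp only [couplingDensity, add_comm (f _)]
  exact lintegral_exp_add_add hc.uncurry_flip hf (g y) y

variable [IsProbabilityMeasure μ] [IsProbabilityMeasure ν]

lemma eq_zero_of_softTransform_softTransform_eq_add_const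
    (hc : BddMeasurable (Function.uncurry c)) (hf : BddMeasurable f) {s : ℝ}
    (h : ∀ x, softTransform ν c (softTransform μ (flip c) f) x = f x + s) : s = 0 := by
  set g := softTransform μ (flip c) f with hg_def
  have hg : BddMeasurable g := bddMeasurable_softTransform hc.uncurry_flip hf
  have hswap := lintegral_lintegral_swap (μ := μ) (ν := ν)
    (f := fun x y => couplingDensity c f g (x, y))
    (measurable_couplingDensity hc hf hg).aemeasurable
  simp only [lintegral_couplingDensity_right hc hg, lintegral_couplingDensity_left hc hf, h,
    ← hg_def, sub_add_cancel_left, sub_self, lintegral_const, measure_univ, mul_one] at hswap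
  rw [ENNReal.ofReal_eq_ofReal_iff (Real.exp_pos _).le (Real.exp_pos _).le, Real.exp_eq_exp]
    at hswap
  exact neg_eq_zero.1 hswap

theorem exists_isSchrodingerPair (μ : Measure α) (ν : Measure β) [IsProbabilityMeasure μ]
    [IsProbabilityMeasure ν] (hc : BddMeasurable (Function.uncurry c)) :
    ∃ f g, IsSchrodingerPair μ ν c f g := by
  have : Nonempty α := nonempty_of_isProbabilityMeasure μ
  obtain ⟨θ, hθ⟩ := exists_oscContracting_softTransform ν hc
  obtain ⟨θ', hθ'⟩ := exists_oscContracting_softTransform μ hc.uncurry_flip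
  obtain ⟨f, hf, s, hs⟩ := (hθ.comp hθ').exists_apply_eq_add_const
  obtain rfl : s = 0 := eq_zero_of_softTransform_softTransform_eq_add_const hc hf hs
  exact ⟨f, softTransform μ (flip c) f, hf, bddMeasurable_softTransform hc.uncurry_flip hf,
    funext fun x => (hs x).trans (add_zero _), rfl⟩

namespace IsSchrodingerPair

theorem fst_coupling (hc : BddMeasurable (Function.uncurry c))
    (h : IsSchrodingerPair μ ν c f g) :
    ((μ.prod ν).withDensity (couplingDensity c f g)).fst = μ :=
  fst_withDensity_prod (measurable_couplingDensity hc h.left h.right) fun x => by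
    rw [lintegral_couplingDensity_right hc h.right, h.softTransform_right, sub_self, Real.exp_zero,
      ENNReal.ofReal_one]

theorem snd_coupling (hc : BddMeasurable (Function.uncurry c))
    (h : IsSchrodingerPair μ ν c f g) :
    ((μ.prod ν).withDensity (couplingDensity c f g)).snd = ν :=
  snd_withDensity_prod (measurable_couplingDensity hc h.left h.right) fun y => by
    rw [lintegral_couplingDensity_left hc h.left, h.softTransform_left, sub_self, Real.exp_zero,
      ENNReal.ofReal_one]

theorem isProbabilityMeasure_coupling (hc : BddMeasurable (Function.uncurry c))
    (h : IsSchrodingerPair μ ν c f g) :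
    IsProbabilityMeasure ((μ.prod ν).withDensity (couplingDensity c f g)) :=
  ⟨by rw [← Measure.fst_univ, h.fst_coupling hc, measure_univ]⟩

theorem exists_eq_add_const (hc : BddMeasurable (Function.uncurry c))
    (h : IsSchrodingerPair μ ν c f g) (h' : IsSchrodingerPair μ ν c f' g') :
    ∃ s : ℝ, (∀ x, f' x = f x + s) ∧ ∀ y, g' y = g y - s := by
  have : Nonempty α := nonempty_of_isProbabilityMeasure μ
  obtain ⟨θ, hθ⟩ := exists_oscContracting_softTransform ν hc
  obtain ⟨θ', hθ'⟩ := exists_oscContracting_softTransform μ hc.uncurry_flip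
  have hfix {f : α → ℝ} {g : β → ℝ} (h : IsSchrodingerPair μ ν c f g) :
      Function.IsFixedPt (softTransform ν c ∘ softTransform μ (flip c)) f :=
    (congrArg _ h.softTransform_left).trans h.softTransform_right
  obtain ⟨s, hs⟩ := (hθ.comp hθ').exists_eq_add_const_of_isFixedPt h.left h'.left (hfix h) (hfix h')
  refine ⟨s, hs, fun y => ?_⟩
  rw [← h'.softTransform_left, funext hs, softTransform_add_const hc.uncurry_flip h.left,
    h.softTransform_left]

end IsSchrodingerPair

end SchrodingerSystem

theorem stmt14_general {S T : Type*} [MeasurableSpace S] [MeasurableSpace T]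
    (μ₀ : Measure S) (ν₀ : Measure T) [IsProbabilityMeasure μ₀] [IsProbabilityMeasure ν₀]
    (F : S × T → ℝ) (hF : Measurable F) (m M : ℝ) (hm : 0 < m) (hFb : ∀ z, m ≤ F z ∧ F z ≤ M) :
    ∃ 𝔣 : S → ℝ, ∃ 𝔤 : T → ℝ, Measurable 𝔣 ∧ Measurable 𝔤 ∧
      (∃ B : ℝ, ∀ x, |𝔣 x| ≤ B) ∧ (∃ B : ℝ, ∀ y, |𝔤 y| ≤ B) ∧
      (∀ x, 𝔣 x + Real.log (∫ y, F (x, y) * Real.exp (𝔤 y) ∂ν₀) = 0) ∧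
      (∀ y, 𝔤 y + Real.log (∫ x, F (x, y) * Real.exp (𝔣 x) ∂μ₀) = 0) ∧
      IsProbabilityMeasure
        ((μ₀.prod ν₀).withDensity fun z => ENNReal.ofReal (F z * Real.exp (𝔣 z.1 + 𝔤 z.2))) ∧
      ((μ₀.prod ν₀).withDensity
          (fun z => ENNReal.ofReal (F z * Real.exp (𝔣 z.1 + 𝔤 z.2)))).map Prod.fst = μ₀ ∧
      ((μ₀.prod ν₀).withDensity
          (fun z => ENNReal.ofReal (F z * Real.exp (𝔣 z.1 + 𝔤 z.2)))).map Prod.snd = ν₀ ∧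
      ∀ 𝔣' : S → ℝ, ∀ 𝔤' : T → ℝ, Measurable 𝔣' → Measurable 𝔤' →
        (∃ B : ℝ, ∀ x, |𝔣' x| ≤ B) → (∃ B : ℝ, ∀ y, |𝔤' y| ≤ B) →
        (∀ x, 𝔣' x + Real.log (∫ y, F (x, y) * Real.exp (𝔤' y) ∂ν₀) = 0) →
        (∀ y, 𝔤' y + Real.log (∫ x, F (x, y) * Real.exp (𝔣' x) ∂μ₀) = 0) →
        ∃ s : ℝ, (∀ x, 𝔣' x = 𝔣 x + s) ∧ (∀ y, 𝔤' y = 𝔤 y - s) := by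
  have hpos (z : S × T) : 0 < F z := hm.trans_le (hFb z).1
  have hc := bddMeasurable_uncurry_log hF hm hFb
  obtain ⟨f, g, h⟩ := exists_isSchrodingerPair μ₀ ν₀ hc
  obtain ⟨hf, hg, hfg, hgf⟩ := (isSchrodingerPair_log_iff hpos).1 h
  simp only [← couplingDensity_log hpos]
  exact ⟨f, g, hf.measurable, hg.measurable, hf.exists_abs_le, hg.exists_abs_le, hfg, hgf,
    h.isProbabilityMeasure_coupling hc, h.fst_coupling hc, h.snd_coupling hc,
    fun f' g' hf' hg' hBf' hBg' hfg' hgf' => h.exists_eq_add_const hc <|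
      (isSchrodingerPair_log_iff hpos).2 ⟨⟨hf', hBf'⟩, ⟨hg', hBg'⟩, hfg', hgf'⟩⟩

/-- Existence and uniqueness (up to an additive constant) of Schrödinger
potentials for a continuous kernel bounded between two positive constants on the product
of two compact metric probability spaces. -/
theorem stmt14 (S T : Type*)
    [MetricSpace S] [CompactSpace S] [MeasurableSpace S] [BorelSpace S]
    [MetricSpace T] [CompactSpace T] [MeasurableSpace T] [BorelSpace T]
    (μ₀ : Measure S) (ν₀ : Measure T)
    (hμ₀ : IsProbabilityMeasure μ₀) (hν₀ : IsProbabilityMeasure ν₀)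
    (F : S × T → ℝ) (hF : Continuous F) (m M : ℝ) (hm : 0 < m)
    (hFb : ∀ z, m ≤ F z ∧ F z ≤ M) :
    ∃ 𝔣 : S → ℝ, ∃ 𝔤 : T → ℝ, Measurable 𝔣 ∧ Measurable 𝔤 ∧
      (∃ B : ℝ, ∀ x, |𝔣 x| ≤ B) ∧ (∃ B : ℝ, ∀ y, |𝔤 y| ≤ B) ∧
      (∀ x, 𝔣 x + Real.log (∫ y, F (x, y) * Real.exp (𝔤 y) ∂ν₀) = 0) ∧
      (∀ y, 𝔤 y + Real.log (∫ x, F (x, y) * Real.exp (𝔣 x) ∂μ₀) = 0) ∧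
      IsProbabilityMeasure
        ((μ₀.prod ν₀).withDensity fun z => ENNReal.ofReal (F z * Real.exp (𝔣 z.1 + 𝔤 z.2))) ∧
      ((μ₀.prod ν₀).withDensity
          (fun z => ENNReal.ofReal (F z * Real.exp (𝔣 z.1 + 𝔤 z.2)))).map Prod.fst = μ₀ ∧
      ((μ₀.prod ν₀).withDensity
          (fun z => ENNReal.ofReal (F z * Real.exp (𝔣 z.1 + 𝔤 z.2)))).map Prod.snd = ν₀ ∧
      ∀ 𝔣' : S → ℝ, ∀ 𝔤' : T → ℝ, Measurable 𝔣' → Measurable 𝔤' →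
        (∃ B : ℝ, ∀ x, |𝔣' x| ≤ B) → (∃ B : ℝ, ∀ y, |𝔤' y| ≤ B) →
        (∀ x, 𝔣' x + Real.log (∫ y, F (x, y) * Real.exp (𝔤' y) ∂ν₀) = 0) →
        (∀ y, 𝔤' y + Real.log (∫ x, F (x, y) * Real.exp (𝔣' x) ∂μ₀) = 0) →
        ∃ s : ℝ, (∀ᵐ x ∂μ₀, 𝔣' x = 𝔣 x + s) ∧ (∀ᵐ y ∂ν₀, 𝔤' y = 𝔤 y - s) := by
  obtain ⟨f, g, hf, hg, hBf, hBg, hfg, hgf, hprob, hfst, hsnd, huniq⟩ :=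
    stmt14_general μ₀ ν₀ F hF.measurable m M hm hFb
  exact ⟨f, g, hf, hg, hBf, hBg, hfg, hgf, hprob, hfst, hsnd,
    fun f' g' hf' hg' hBf' hBg' hfg' hgf' => (huniq f' g' hf' hg' hBf' hBg' hfg' hgf').imp
      fun _ hs => ⟨ae_of_all _ hs.1, ae_of_all _ hs.2⟩⟩
end
end
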